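/- Let 0 < θ < 1, let 1 ≤ q₀, q₁ < ∞ be constants, let p₀, p₁ be globally log-Hölder continuous exponents with 1 ≤ p₀⁻ ≤ p₀⁺ < ∞ and 1 ≤ p₁⁻ ≤ p₁⁺ < ∞, and let α₀, α₁ : ℝ^n → ℝ be locally log-Hölder continuous. Define 1/p(·) := (1−θ)/p₀(·) + θ/p₁(·), 1/q := (1−θ)/q₀ + θ/q₁, α(·) := (1−θ)α₀(·) + θα₁(·), and γ(x) := p(x)/p₀(x) − q/q₀. Assume that γ(x) ≠ 0 for all x ∈ ℝ^n. Then the Calderón product (f^{α₀(·)}_{p₀(·),q₀})^{1−θ} · (f^{α₁(·)}_{p₁(·),q₁})^{θ} equals f^{α(·)}_{p(·),q} with equivalent norms. -/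

import Mathlib

open MeasureTheory ENNReal Real Set

noncomputable section

/-- Euclidean space ℝ^n. -/
abbrev En (n : ℕ) := EuclideanSpace ℝ (Fin n)

/-- `g` is locally log-Hölder continuous with constant `c`. -/
def LocLogHolder {n : ℕ} (c : ℝ) (g : En n → ℝ) : Prop :=
  0 < c ∧ ∀ x y : En n, |g x - g y| ≤ c / Real.log (Real.exp 1 + 1 / ‖x - y‖)

/-- `g` is globally log-Hölder continuous with local constant `c`. -/
def GlobLogHolder {n : ℕ} (c : ℝ) (g : En n → ℝ) : Prop :=
  LocLogHolder c g ∧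
    ∃ (gi cd : ℝ), 0 < cd ∧ ∀ x : En n, |g x - gi| ≤ cd / Real.log (Real.exp 1 + ‖x‖)

/-- The kernel η_{v,h}(x) = 2^{nv} (1 + 2^v |x|)^{-h}. -/
def eta (n : ℕ) (v : ℕ) (h : ℝ) (x : En n) : ℝ :=
  (2 : ℝ) ^ (n * v) * (1 + (2 : ℝ) ^ v * ‖x‖) ^ (-h)

/-- The dyadic cube Q_{v,m}. -/
def dyadicCube (n : ℕ) (v : ℤ) (m : Fin n → ℤ) : Set (En n) :=
  {x | ∀ i, (m i : ℝ) ≤ (2 : ℝ) ^ v * x i ∧ (2 : ℝ) ^ v * x i < m i + 1}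

/-- Luxemburg (quasi-)norm of an ℝ≥0∞-valued function with variable exponent `p`. -/
def luxNorm {n : ℕ} (p : En n → ℝ) (F : En n → ℝ≥0∞) : ℝ≥0∞ :=
  sInf {c : ℝ≥0∞ | 0 < c ∧ ∫⁻ x, (F x / c) ^ p x ≤ 1}

/-- The mixed Lebesgue-sequence space norm ‖(F_v)_v‖_{L^{p(·)}(ℓ_{q(·)})}. -/
def mixedNorm {n : ℕ} (p q : En n → ℝ) (F : ℕ → En n → ℝ≥0∞) : ℝ≥0∞ :=
  luxNorm p fun x => (∑' v : ℕ, F v x ^ q x) ^ (1 / q x)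

/-- The sequence space norm ‖λ‖_{f^{α(·)}_{p(·),q(·)}}. -/
def seqNorm {n : ℕ} (α p q : En n → ℝ) (lam : ℕ → (Fin n → ℤ) → ℂ) : ℝ≥0∞ :=
  mixedNorm p q fun v x =>
    ∑' m : Fin n → ℤ,
      ENNReal.ofReal ((2 : ℝ) ^ ((v : ℝ) * (α x + n / 2)) * ‖lam v m‖) *
        (dyadicCube n (v : ℤ) m).indicator (fun _ => (1 : ℝ≥0∞)) x

/-- The sequence space norm ‖λ‖_{f^{α(·)}_{∞,q}}. -/
def seqNormInf {n : ℕ} (α : En n → ℝ) (q : ℝ) (lam : ℕ → (Fin n → ℤ) → ℂ) : ℝ≥0∞ :=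
  ⨆ (vQ : ℤ) (mQ : Fin n → ℤ),
    volume (dyadicCube n vQ mQ) ^ (-(1 / q)) *
      (∑' v : ℕ, if vQ ≤ (v : ℤ) then
          ∫⁻ x in dyadicCube n vQ mQ,
            ∑' m : Fin n → ℤ,
              ENNReal.ofReal ((2 : ℝ) ^ ((v : ℝ) * (α x + n / 2) * q) * ‖lam v m‖ ^ q) *
                (dyadicCube n (v : ℤ) m).indicator (fun _ => (1 : ℝ≥0∞)) x
        else 0) ^ (1 / q)

/-- The Calderón product (quasi-)norm associated to two sequence space norms. -/
def calderonNorm {n : ℕ} (N0 N1 : (ℕ → (Fin n → ℤ) → ℂ) → ℝ≥0∞) (θ : ℝ)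
    (lam : ℕ → (Fin n → ℤ) → ℂ) : ℝ≥0∞ :=
  sInf {M : ℝ≥0∞ | ∃ μ ν : ℕ → (Fin n → ℤ) → ℂ, N0 μ ≤ 1 ∧ N1 ν ≤ 1 ∧
    ∀ v m, ENNReal.ofReal ‖lam v m‖ ≤
      M * ENNReal.ofReal ‖μ v m‖ ^ (1 - θ) * ENNReal.ofReal ‖ν v m‖ ^ θ}

def mIdx {n : ℕ} (v : ℕ) (x : En n) : Fin n → ℤ := fun i => ⌊(2:ℝ)^v * x i⌋

def corner {n : ℕ} (v : ℕ) (m : Fin n → ℤ) : En n := WithLp.toLp 2 (fun i => (m i : ℝ) / 2^v)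

lemma mem_dyadic_iff {n : ℕ} (v : ℕ) (m : Fin n → ℤ) (x : En n) :
    x ∈ dyadicCube n (v:ℤ) m ↔ m = mIdx v x := by
  simp only [dyadicCube, mIdx, Set.mem_ofPred_eq, zpow_natCast, funext_iff]
  refine forall_congr' fun i => ?_
  rw [eq_comm, Int.floor_eq_iff]

lemma mIdx_corner {n : ℕ} {u v : ℕ} (h : u ≤ v) (x : En n) :
    mIdx u (corner v (mIdx v x)) = mIdx u x := by
  funext i
  simp only [mIdx, corner]
  obtain ⟨k, rfl⟩ := Nat.exists_eq_add_of_le h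
  have h2 : (0:ℝ) < 2^k := by positivity
  have h3 : (0:ℝ) < 2^u := by positivity
  have e1 : (2:ℝ)^u * ((⌊(2:ℝ)^(u+k) * x i⌋ : ℝ) / 2^(u+k)) = (⌊(2:ℝ)^(u+k) * x i⌋ : ℝ) / 2^k := by
    rw [pow_add]; field_simp
  rw [e1, Int.floor_eq_iff]
  have hz : (2:ℝ)^(u+k) * x i = 2^k * (2^u * x i) := by rw [pow_add]; ring
  rw [hz]
  generalize (2:ℝ)^u * x i = z
  constructor
  · rw [le_div_iff₀ h2]
    have : (⌊z⌋ * 2^k : ℤ) ≤ ⌊2^k * z⌋ := by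
      rw [Int.le_floor]; push_cast
      rw [mul_comm]
      exact mul_le_mul_of_nonneg_left (Int.floor_le z) h2.le
    exact_mod_cast this
  · rw [div_lt_iff₀ h2]
    calc (⌊2^k * z⌋ : ℝ) ≤ 2^k * z := Int.floor_le _
      _ < 2^k * (⌊z⌋ + 1) := mul_lt_mul_of_pos_left (Int.lt_floor_add_one z) h2
      _ = _ := by ring

lemma norm_sub_corner {n : ℕ} (v : ℕ) (x : En n) :
    ‖x - corner v (mIdx v x)‖ ≤ ((n:ℝ)+1) / 2^v := by
  rw [EuclideanSpace.norm_eq]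
  have h2 : (0:ℝ) < 2^v := by positivity
  apply Real.sqrt_le_iff.mpr
  refine ⟨by positivity, ?_⟩
  have hb : ∀ i, ‖(x - corner v (mIdx v x)) i‖^2 ≤ (1/2^v)^2 := by
    intro i
    have e : (x - corner v (mIdx v x)) i = (2^v * x i - ⌊(2:ℝ)^v * x i⌋) / 2^v := by
      simp only [corner, mIdx, PiLp.sub_apply]; field_simp
    rw [e, Real.norm_eq_abs]
    apply pow_le_pow_left₀ (abs_nonneg _)
    rw [abs_div, abs_of_pos h2]
    apply div_le_div_of_nonneg_right _ h2.le
    rw [abs_le]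
    constructor
    · linarith [Int.floor_le ((2:ℝ)^v * x i)]
    · linarith [Int.lt_floor_add_one ((2:ℝ)^v * x i)]
  calc _ ≤ ∑ i : Fin n, ((1:ℝ)/2^v)^2 := Finset.sum_le_sum fun i _ => hb i
    _ = n * (1/2^v)^2 := by simp
    _ ≤ ((n+1)*(1/2^v))^2 := by
      rw [mul_pow]
      apply mul_le_mul_of_nonneg_right _ (by positivity)
      nlinarith [(Nat.cast_nonneg n : (0:ℝ) ≤ n)]
    _ = _ := by ring

lemma volume_dyadic (n : ℕ) (v : ℕ) (m : Fin n → ℤ) :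
    volume (dyadicCube n (v:ℤ) m) = ENNReal.ofReal ((1/2^v)^n) := by
  have h2 : (0:ℝ) < 2^v := by positivity
  have e : dyadicCube n (v:ℤ) m = (MeasurableEquiv.toLp 2 (Fin n → ℝ)).symm ⁻¹'
      (Set.univ.pi fun i => Set.Ico ((m i : ℝ)/2^v) ((m i + 1 : ℝ)/2^v)) := by
    ext x
    simp only [dyadicCube, Set.mem_ofPred_eq, Set.mem_preimage, Set.mem_pi, Set.mem_univ,
      forall_true_left, Set.mem_Ico, zpow_natCast]
    refine forall_congr' fun i => ?_
    rw [div_le_iff₀ h2, lt_div_iff₀ h2, mul_comm]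
    rfl
  rw [e, (EuclideanSpace.volume_preserving_symm_measurableEquiv_toLp (Fin n)).measure_preimage
    (MeasurableSet.univ_pi fun i => measurableSet_Ico).nullMeasurableSet,
    Real.volume_pi_Ico]
  rw [← ENNReal.ofReal_prod_of_nonneg]
  · congr 1
    have : ∀ i, ((m i + 1 : ℝ)/2^v) - (m i : ℝ)/2^v = 1/2^v := fun i => by ring
    simp only [this, Finset.prod_const, Finset.card_univ, Fintype.card_fin]
  · intro i _
    rw [← sub_div]; apply div_nonneg _ h2.le; linarith

/-- explicit form of the square function -/
def seqF {n : ℕ} (α : En n → ℝ) (q : ℝ) (lam : ℕ → (Fin n → ℤ) → ℂ) (x : En n) : ℝ≥0∞ :=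
  (∑' v : ℕ, ENNReal.ofReal ((2 : ℝ) ^ ((v : ℝ) * (α x + n / 2)) * ‖lam v (mIdx v x)‖) ^ q) ^ (1/q)

lemma seqNorm_eq {n : ℕ} (α p : En n → ℝ) (q : ℝ) (lam : ℕ → (Fin n → ℤ) → ℂ) :
    seqNorm α p (fun _ => q) lam = luxNorm p (seqF α q lam) := by
  unfold seqNorm mixedNorm
  congr 1
  funext x
  unfold seqF
  congr 1
  refine tsum_congr fun v => ?_
  congr 1
  beta_reduce
  rw [tsum_eq_single (mIdx v x)]
  · rw [Set.indicator_of_mem ((mem_dyadic_iff v _ x).2 rfl), mul_one]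
  · intro m hm
    rw [Set.indicator_of_notMem (fun h => hm ((mem_dyadic_iff v _ x).1 h)), mul_zero]

lemma measurable_mIdx {n : ℕ} (v : ℕ) : Measurable (mIdx v : En n → Fin n → ℤ) := by
  refine measurable_pi_lambda _ fun i => ?_
  unfold mIdx
  refine Int.measurable_floor.comp ?_
  fun_prop

lemma measurable_seqF {n : ℕ} (α : En n → ℝ) (hα : Measurable α) (q : ℝ)
    (lam : ℕ → (Fin n → ℤ) → ℂ) : Measurable (seqF α q lam) := by
  unfold seqF
  refine Measurable.pow_const (Measurable.tsum fun v => ?_) _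
  refine Measurable.pow_const ?_ _
  refine ENNReal.measurable_ofReal.comp (Measurable.mul ?_ ?_)
  · fun_prop
  · have : Measurable fun m : Fin n → ℤ => ‖lam v m‖ := measurable_of_countable _
    exact this.comp (measurable_mIdx v)

lemma LocLogHolder.cont {n : ℕ} {c : ℝ} {g : En n → ℝ} (h : LocLogHolder c g) : Continuous g := by
  obtain ⟨hc, h⟩ := h
  rw [Metric.continuous_iff]
  intro y ε hε
  refine ⟨Real.exp (-(c/ε)), Real.exp_pos _, fun x hx => ?_⟩
  rw [Real.dist_eq]
  rw [dist_eq_norm] at hx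
  rcases eq_or_ne x y with rfl | hne
  · simpa using hε
  have hpos : 0 < ‖x - y‖ := norm_pos_iff.2 (sub_ne_zero.2 hne)
  refine (h x y).trans_lt ?_
  have h1 : Real.exp (c/ε) < Real.exp 1 + 1/‖x-y‖ := by
    have : Real.exp (c/ε) < 1/‖x-y‖ := by
      rw [lt_one_div (Real.exp_pos _) hpos, one_div, ← Real.exp_neg]; exact hx
    linarith [Real.exp_pos 1]
  have h2 : c/ε < Real.log (Real.exp 1 + 1/‖x-y‖) := by
    rw [Real.lt_log_iff_exp_lt (by positivity)]; exact h1
  have h3 : 0 < c/ε := by positivity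
  rw [div_lt_iff₀ (h3.trans h2)]
  rw [div_lt_iff₀ hε] at h2
  linarith

lemma one_le_log_e_add {t : ℝ} (ht : 0 ≤ t) : 1 ≤ Real.log (Real.exp 1 + t) := by
  rw [Real.le_log_iff_exp_le (by positivity)]; linarith

lemma LocLogHolder.corner {n : ℕ} {c : ℝ} {g : En n → ℝ} (h : LocLogHolder c g) :
    ∃ K : ℝ, 0 < K ∧ ∀ (v : ℕ) (x : En n), |g x - g (corner v (mIdx v x))| * ((v:ℝ)+1) ≤ K := by
  obtain ⟨hc, h⟩ := h
  have hn : (0:ℝ) ≤ n := Nat.cast_nonneg n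
  have hD : 0 ≤ Real.log ((n:ℝ)+1) := Real.log_nonneg (by linarith)
  have hl2 : 0 < Real.log 2 := Real.log_pos (by norm_num)
  refine ⟨c * ((Real.log ((n:ℝ)+1) + 1) / Real.log 2 + 1), by positivity, fun v x => ?_⟩
  set X := _root_.corner v (mIdx v x) with hX
  rcases eq_or_ne x X with hxe | hne
  · rw [← hxe]; simp; positivity
  have hpos : 0 < ‖x - X‖ := norm_pos_iff.2 (sub_ne_zero.2 hne)
  have hd := norm_sub_corner v x
  rw [← hX] at hd
  have hv : (0:ℝ) < 2^v := by positivity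
  set L := Real.log (Real.exp 1 + 1/‖x - X‖) with hL
  have hL1 : 1 ≤ L := one_le_log_e_add (by positivity)
  have h2v : (2:ℝ)^v ≤ ((n:ℝ)+1) * (Real.exp 1 + 1/‖x-X‖) := by
    have : (2:ℝ)^v ≤ (n+1) * (1/‖x-X‖) := by
      rw [mul_one_div, le_div_iff₀ hpos]
      rw [le_div_iff₀ hv] at hd; linarith
    nlinarith [Real.exp_pos 1]
  have hlog := Real.log_le_log hv h2v
  rw [Real.log_pow, Real.log_mul (by positivity) (by positivity), ← hL] at hlog
  have hvL : (v:ℝ)+1 ≤ ((Real.log ((n:ℝ)+1) + 1) / Real.log 2 + 1) * L := by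
    have : (v:ℝ) ≤ (Real.log ((n:ℝ)+1) + 1) / Real.log 2 * L := by
      rw [div_mul_eq_mul_div, le_div_iff₀ hl2]
      nlinarith
    nlinarith
  calc _ ≤ (c / L) * (((Real.log ((n:ℝ)+1) + 1) / Real.log 2 + 1) * L) :=
        mul_le_mul (h x X) hvL (by positivity) (by positivity)
    _ = _ := by field_simp

lemma log_e_le {n : ℕ} (v : ℕ) (x : En n) :
    Real.log (Real.exp 1 + ‖x‖) ≤ (Real.log ((n:ℝ)+2) + 1) *
      Real.log (Real.exp 1 + ‖corner v (mIdx v x)‖) := by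
  have hn : (0:ℝ) ≤ n := Nat.cast_nonneg n
  have hD : 0 ≤ Real.log ((n:ℝ)+2) := Real.log_nonneg (by linarith)
  have hd := norm_sub_corner v x
  set X := corner v (mIdx v x)
  have hd' : ‖x - X‖ ≤ n + 1 := hd.trans (div_le_self (by linarith) (one_le_pow₀ (by norm_num)))
  have h1 : ‖x‖ ≤ ‖X‖ + (n+1) := by
    calc ‖x‖ = ‖X + (x - X)‖ := by congr 1; abel
      _ ≤ _ := (norm_add_le _ _).trans (by linarith)
  have he : 1 ≤ Real.exp 1 := Real.one_le_exp (by norm_num)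
  have h2 : Real.exp 1 + ‖x‖ ≤ ((n:ℝ)+2) * (Real.exp 1 + ‖X‖) := by
    nlinarith [norm_nonneg X]
  have := Real.log_le_log (by positivity) h2
  rw [Real.log_mul (by positivity) (by positivity)] at this
  nlinarith [one_le_log_e_add (norm_nonneg X)]

lemma GlobLogHolder.corner {n : ℕ} {c : ℝ} {g : En n → ℝ} (h : GlobLogHolder c g) :
    ∃ K : ℝ, 0 < K ∧ ∀ (v : ℕ) (x : En n),
      |g x - g (corner v (mIdx v x))| * ((v:ℝ)+1+Real.log (Real.exp 1 + ‖x‖)) ≤ K := by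
  obtain ⟨K, hK, hK'⟩ := h.1.corner
  obtain ⟨-, gi, cd, hcd, h⟩ := h
  have hn : (0:ℝ) ≤ n := Nat.cast_nonneg n
  have hD : 0 ≤ Real.log ((n:ℝ)+2) := Real.log_nonneg (by linarith)
  refine ⟨K + (cd + cd * (Real.log ((n:ℝ)+2) + 1)), by positivity, fun v x => ?_⟩
  rw [mul_add]
  refine add_le_add (hK' v x) ?_
  have hx := h x
  have hX := h (_root_.corner v (mIdx v x))
  have hl := log_e_le v x
  set X := _root_.corner v (mIdx v x)
  have h1 := one_le_log_e_add (norm_nonneg x)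
  have h2 := one_le_log_e_add (norm_nonneg X)
  rw [le_div_iff₀ (by linarith)] at hx hX
  have h3 : |g X - gi| * Real.log (Real.exp 1 + ‖x‖) ≤ cd * (Real.log ((n:ℝ)+2) + 1) := by
    nlinarith [abs_nonneg (g X - gi)]
  have h4 : |g x - g X| ≤ |g x - gi| + |g X - gi| := by
    have := abs_sub_le (g x) gi (g X)
    rwa [abs_sub_comm gi] at this
  nlinarith
lemma tele_step {ε T b : ℝ} (hε : 0 < ε) (hb : 0 ≤ b) (hbT : b ≤ T) (hT : 0 < T) :
    b * T^(ε-1) ≤ max 1 (1/ε) * (T^ε - (T-b)^ε) := by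
  have hT1 : 0 ≤ T - b := by linarith
  have hTe : T^ε = T^(ε-1) * T := by
    rw [← Real.rpow_add_one hT.ne']; ring_nf
  have hp : 0 < T^(ε-1) := Real.rpow_pos_of_pos hT _
  have hmono : 0 ≤ T^ε - (T-b)^ε :=
    sub_nonneg.2 (Real.rpow_le_rpow hT1 (by linarith) hε.le)
  rcases le_total 1 ε with h | h
  · refine le_trans ?_ (mul_le_mul_of_nonneg_right (le_max_left _ _) hmono)
    have : (T-b)^ε ≤ T^(ε-1) * (T-b) := by
      rcases hT1.eq_or_lt with h0 | h0
      · rw [← h0, Real.zero_rpow hε.ne']; simp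
      have : (T-b)^ε = (T-b)^(ε-1) * (T-b) := by
        rw [← Real.rpow_add_one h0.ne']; ring_nf
      rw [this]
      exact mul_le_mul_of_nonneg_right
        (Real.rpow_le_rpow hT1 (by linarith) (by linarith)) hT1
    rw [hTe]; nlinarith
  · refine le_trans ?_ (mul_le_mul_of_nonneg_right (le_max_right _ _) hmono)
    have hbern := rpow_one_add_le_one_add_mul_self (s := -(b/T)) (p := ε)
      (by rw [neg_le_neg_iff, div_le_one hT]; exact hbT) hε.le h
    have e : (T-b)^ε = T^ε * (1 + -(b/T))^ε := by
      rw [← Real.mul_rpow hT.le]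
      · congr 1; field_simp; ring
      · have : b/T ≤ 1 := by rw [div_le_one hT]; exact hbT
        linarith
    have h2 : (T-b)^ε ≤ T^ε * (1 + ε * -(b/T)) := by
      rw [e]; exact mul_le_mul_of_nonneg_left hbern (by positivity)
    have h3 : T^ε * (1 + ε * -(b/T)) = T^ε - ε * (b * T^(ε-1)) := by
      rw [hTe]; field_simp; ring
    rw [h3] at h2
    rw [one_div, ← div_eq_inv_mul, le_div_iff₀ hε]
    linarith

lemma tele_sum {ε : ℝ} (hε : 0 < ε) (b : ℕ → ℝ) (hb : ∀ v, 0 < b v) (N : ℕ) :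
    ∑ v ∈ Finset.range N, b v * (∑ u ∈ Finset.range (v+1), b u)^(ε-1) ≤
      max 1 (1/ε) * (∑ u ∈ Finset.range N, b u)^ε := by
  induction N with
  | zero => simp [Real.zero_rpow hε.ne']
  | succ N ih =>
    rw [Finset.sum_range_succ]
    have hn : 0 ≤ ∑ u ∈ Finset.range N, b u := Finset.sum_nonneg fun i _ => (hb i).le
    have hs : ∑ u ∈ Finset.range (N+1), b u = ∑ u ∈ Finset.range N, b u + b N :=
      Finset.sum_range_succ _ _
    have := tele_step (T := ∑ u ∈ Finset.range (N+1), b u) (b := b N) hε (hb N).le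
      (by linarith) (by linarith [hb N])
    have e : ∑ u ∈ Finset.range (N+1), b u - b N = ∑ u ∈ Finset.range N, b u := by linarith
    rw [e] at this
    linarith

lemma rpow_compare {T s t K : ℝ} (hT : 0 < T) (h : |Real.log T| * |s - t| ≤ K) :
    T^s ≤ Real.exp K * T^t := by
  rw [Real.rpow_def_of_pos hT, Real.rpow_def_of_pos hT, ← Real.exp_add]
  apply Real.exp_le_exp.2
  have := le_abs_self (Real.log T * (s - t))
  rw [abs_mul] at this
  linarith

lemma half_pt (q q₀ B K Kα : ℝ) (hq : 1 ≤ q) (hq₀ : 1 ≤ q₀) (hB : 1 ≤ B) (hK : 0 ≤ K)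
    (hKα : 1 ≤ Kα) :
    ∃ C : ℝ, 0 < C ∧ ∀ (P P₀ : ℝ) (b ρ g : ℕ → ℝ) (κ : ℝ), 1 ≤ P → 1 ≤ P₀ → P₀ ≤ B →
      (∀ v, 0 < b v) → (∀ v, 0 ≤ g v) →
      (∀ v, |Real.log (∑ u ∈ Finset.range (v+1), b u)| * |ρ v - P/P₀| ≤ K) →
      0 < κ → κ ≤ 1 →
      (∀ v, g v ≤ Kα * (κ * (b v)^(1/q₀) *
        (∑ u ∈ Finset.range (v+1), b u)^((ρ v - q/q₀)/q))) →
      ((∑' v, ENNReal.ofReal (g v) ^ q₀)^(1/q₀))^P₀ ≤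
        ENNReal.ofReal (C * κ) * (∑' v, ENNReal.ofReal (b v)) ^ (P/q) := by
  have hq0 : 0 < q := by linarith
  have hq00 : 0 < q₀ := by linarith
  set D : ℝ := Kα^q₀ * Real.exp (K * (q₀/q)) * max 1 (B*q/q₀) with hD
  have hD1 : 1 ≤ D := by
    have h1 : 1 ≤ Kα^q₀ := Real.one_le_rpow hKα hq00.le
    have h2 : 1 ≤ Real.exp (K * (q₀/q)) := Real.one_le_exp (by positivity)
    have h3 : 1 ≤ max 1 (B*q/q₀) := le_max_left _ _
    calc (1:ℝ) = 1 * 1 * 1 := by norm_num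
      _ ≤ D := by rw [hD]; gcongr
  refine ⟨D^B, by positivity, ?_⟩
  intro P P₀ b ρ g κ hP hP₀ hP₀B hb hg hlog hκ hκ1 hgb
  set T : ℕ → ℝ := fun v => ∑ u ∈ Finset.range (v+1), b u with hT
  have hTpos : ∀ v, 0 < T v := fun v => Finset.sum_pos (fun i _ => hb i) (by simp)
  set ε := P * q₀ / (P₀ * q) with hε
  have hε0 : 0 < ε := by positivity
  have hεm : max 1 (1/ε) ≤ max 1 (B*q/q₀) := by
    apply max_le_max le_rfl
    rw [hε, one_div_div]
    rw [div_le_div_iff₀ (by positivity) hq00]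
    have : P₀ ≤ B * P := by nlinarith
    have : P₀ * (q*q₀) ≤ B * P * (q*q₀) := mul_le_mul_of_nonneg_right this (by positivity)
    linarith
  have hterm : ∀ v, g v ^ q₀ ≤ Kα^q₀ * κ^q₀ * Real.exp (K*(q₀/q)) * (b v * T v^(ε-1)) := by
    intro v
    have hb' := (hb v).le
    have hT' := (hTpos v).le
    calc g v ^ q₀ ≤ (Kα * (κ * (b v)^(1/q₀) * (T v)^((ρ v - q/q₀)/q)))^q₀ :=
          Real.rpow_le_rpow (hg v) (hgb v) hq00.le
      _ = Kα^q₀ * κ^q₀ * (b v * T v ^ (ρ v * q₀/q - 1)) := by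
          rw [Real.mul_rpow (by positivity) (by positivity),
            Real.mul_rpow (by positivity) (by positivity),
            Real.mul_rpow (by positivity) (by positivity), ← Real.rpow_mul hb',
            ← Real.rpow_mul hT', one_div_mul_cancel hq00.ne', Real.rpow_one]
          have : (ρ v - q/q₀)/q*q₀ = ρ v * q₀/q - 1 := by field_simp
          rw [this]; ring
      _ ≤ Kα^q₀ * κ^q₀ * (b v * (Real.exp (K*(q₀/q)) * T v ^ (ε - 1))) := by
          gcongr
          apply rpow_compare (hTpos v)
          have : ρ v * q₀/q - 1 - (ε - 1) = (ρ v - P/P₀) * (q₀/q) := by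
            rw [hε]; field_simp; ring
          rw [this, abs_mul, abs_of_pos (a := q₀/q) (by positivity), ← mul_assoc]
          exact mul_le_mul_of_nonneg_right (hlog v) (by positivity)
      _ = _ := by ring
  have hsum : ∑' v, ENNReal.ofReal (g v) ^ q₀ ≤
      ENNReal.ofReal (D * κ^q₀) * (∑' v, ENNReal.ofReal (b v))^ε := by
    apply ENNReal.tsum_le_of_sum_range_le
    intro N
    have hbN : 0 ≤ ∑ v ∈ Finset.range N, b v := Finset.sum_nonneg fun i _ => (hb i).le
    have h1 : ∑ v ∈ Finset.range N, ENNReal.ofReal (g v) ^ q₀ =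
        ENNReal.ofReal (∑ v ∈ Finset.range N, g v ^ q₀) := by
      rw [ENNReal.ofReal_sum_of_nonneg (fun i _ => Real.rpow_nonneg (hg i) _)]
      exact Finset.sum_congr rfl fun i _ => ENNReal.ofReal_rpow_of_nonneg (hg i) hq00.le
    have h2 : ∑ v ∈ Finset.range N, g v ^ q₀ ≤ D * κ^q₀ * (∑ v ∈ Finset.range N, b v)^ε := by
      calc _ ≤ ∑ v ∈ Finset.range N, Kα^q₀ * κ^q₀ * Real.exp (K*(q₀/q)) * (b v * T v^(ε-1)) :=
            Finset.sum_le_sum fun i _ => hterm i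
        _ = Kα^q₀ * κ^q₀ * Real.exp (K*(q₀/q)) *
              ∑ v ∈ Finset.range N, (b v * T v^(ε-1)) := by rw [Finset.mul_sum]
        _ ≤ Kα^q₀ * κ^q₀ * Real.exp (K*(q₀/q)) *
              (max 1 (B*q/q₀) * (∑ v ∈ Finset.range N, b v)^ε) := by
            gcongr
            refine (tele_sum hε0 b hb N).trans ?_
            gcongr
        _ = _ := by rw [hD]; ring
    rw [h1]
    refine (ENNReal.ofReal_le_ofReal h2).trans ?_
    rw [ENNReal.ofReal_mul (by positivity), ← ENNReal.ofReal_rpow_of_nonneg hbN hε0.le,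
      ENNReal.ofReal_sum_of_nonneg (fun i _ => (hb i).le)]
    gcongr
    exact ENNReal.sum_le_tsum _
  rw [← ENNReal.rpow_mul]
  calc _ ≤ (ENNReal.ofReal (D * κ^q₀) * (∑' v, ENNReal.ofReal (b v))^ε) ^ (1/q₀*P₀) := by
        gcongr
    _ = ENNReal.ofReal ((D * κ^q₀)^(1/q₀*P₀)) * (∑' v, ENNReal.ofReal (b v))^(P/q) := by
        rw [ENNReal.mul_rpow_of_nonneg _ _ (by positivity),
          ENNReal.ofReal_rpow_of_nonneg (by positivity) (by positivity), ← ENNReal.rpow_mul]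
        congr 2
        rw [hε]; field_simp
    _ ≤ _ := by
        gcongr
        rw [Real.mul_rpow (by positivity) (by positivity), ← Real.rpow_mul hκ.le]
        have e : q₀ * (1/q₀*P₀) = P₀ := by field_simp
        rw [e]
        apply mul_le_mul
        · apply Real.rpow_le_rpow_of_exponent_le hD1
          rw [one_div_mul_eq_div]
          exact (div_le_self (by linarith) hq₀).trans hP₀B
        · calc κ^P₀ ≤ κ^(1:ℝ) := Real.rpow_le_rpow_of_exponent_ge hκ hκ1 hP₀
            _ = κ := Real.rpow_one κ
        · positivity
        · positivity

lemma ratio_diff {θ B a0 a1 b0 b1 P P' : ℝ} (hθ : 0 < θ) (hθ1 : θ < 1)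
    (ha0 : 1 ≤ a0) (ha1 : 1 ≤ a1) (hb0 : 1 ≤ b0) (hb1 : 1 ≤ b1)
    (ha0' : a0 ≤ B) (ha1' : a1 ≤ B)
    (hP0 : 0 < P) (hP0' : 0 < P') (hPB : P ≤ B) (hPB' : P' ≤ B)
    (hP : 1 / P = (1-θ)/a0 + θ/a1) (hP' : 1 / P' = (1-θ)/b0 + θ/b1) :
    |P/a0 - P'/b0| ≤ B^3 * (|a0 - b0| + |a1 - b1|) := by
  have e1 : a0 / P = (1-θ) + θ * (a0/a1) := by
    rw [← mul_one_div, hP]; field_simp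
  have e2 : b0 / P' = (1-θ) + θ * (b0/b1) := by
    rw [← mul_one_div, hP']; field_simp
  have hB : 1 ≤ B := ha0.trans ha0'
  have h1 : P/a0 - P'/b0 = (P/a0) * (P'/b0) * (b0/P' - a0/P) := by field_simp
  have h2 : b0/P' - a0/P = θ * (((b0 - a0) * a1 + a0 * (a1 - b1)) / (a1 * b1)) := by
    rw [e1, e2]; field_simp; ring
  have h3 : |((b0 - a0) * a1 + a0 * (a1 - b1)) / (a1 * b1)| ≤ B * (|a0 - b0| + |a1 - b1|) := by
    rw [abs_div, abs_of_pos (a := a1*b1) (by positivity)]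
    have hab : 1 ≤ a1 * b1 := one_le_mul_of_one_le_of_one_le ha1 hb1
    refine (div_le_self (abs_nonneg _) hab).trans ?_
    refine (abs_add_le _ _).trans ?_
    rw [abs_mul, abs_mul, abs_of_pos (a := a1) (by linarith), abs_of_pos (a := a0) (by linarith),
      abs_sub_comm b0]
    nlinarith [abs_nonneg (a0-b0), abs_nonneg (a1-b1)]
  have hr : P/a0 ≤ B := (div_le_self hP0.le ha0).trans hPB
  have hr' : P'/b0 ≤ B := (div_le_self hP0'.le hb0).trans hPB'
  have hr0 : 0 < P/a0 := by positivity
  have hr0' : 0 < P'/b0 := by positivity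
  rw [h1, h2, abs_mul, abs_mul, abs_mul, abs_of_pos hr0, abs_of_pos hr0', abs_of_pos hθ]
  calc _ ≤ B * B * (1 * (B * (|a0 - b0| + |a1 - b1|))) := by gcongr
    _ = _ := by ring

lemma p_bounds {θ B a0 a1 P : ℝ} (hθ : 0 < θ) (hθ1 : θ < 1)
    (ha0 : 1 ≤ a0) (ha1 : 1 ≤ a1) (ha0' : a0 ≤ B) (ha1' : a1 ≤ B)
    (hP : 1 / P = (1-θ)/a0 + θ/a1) : 1 ≤ P ∧ P ≤ B := by
  have hpos : 0 < 1/P := by rw [hP]; have : 0 < 1-θ := by linarith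
                            positivity
  have hP0 : 0 < P := one_div_pos.1 hpos
  have hB : 0 < B := by linarith
  have h1 : 0 < 1 - θ := by linarith
  constructor
  · have : 1/P ≤ 1 := by
      rw [hP]
      have := div_le_self h1.le ha0
      have := div_le_self hθ.le ha1
      linarith
    rwa [div_le_one hP0] at this
  · have : 1/B ≤ 1/P := by
      rw [hP]
      have := div_le_div_of_nonneg_left h1.le (by linarith) ha0'
      have := div_le_div_of_nonneg_left hθ.le (by linarith) ha1'
      have : (1-θ)/B + θ/B = 1/B := by ring
      linarith
    exact (one_div_le_one_div hB hP0).1 this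
lemma young_le (x y : ℝ≥0∞) {s t : ℝ} (hs : 0 ≤ s) (ht : 0 ≤ t) (h : s + t = 1) :
    x^s * y^t ≤ x + y := by
  calc x^s * y^t ≤ (x+y)^s * (x+y)^t := by
        gcongr <;> simp
    _ = x + y := by rw [← ENNReal.rpow_add_of_nonneg _ _ hs ht, h, ENNReal.rpow_one]

lemma holder_tsum (x y : ℕ → ℝ≥0∞) {s t : ℝ} (hs : 0 < s) (ht : 0 < t) (h : s + t = 1) :
    ∑' v, x v^s * y v^t ≤ (∑' v, x v)^s * (∑' v, y v)^t := by
  apply ENNReal.tsum_le_of_sum_range_le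
  intro N
  have hpq : (1/s).HolderConjugate (1/t) := by
    rw [Real.holderConjugate_iff]
    constructor
    · rw [lt_one_div (by norm_num) hs]; linarith
    · simpa using h
  have := ENNReal.inner_le_Lp_mul_Lq (Finset.range N) (fun v => x v^s) (fun v => y v^t) hpq
  refine this.trans ?_
  simp only [← ENNReal.rpow_mul, one_div_one_div, mul_one_div_cancel hs.ne',
    mul_one_div_cancel ht.ne', ENNReal.rpow_one]
  gcongr <;> exact ENNReal.sum_le_tsum _

lemma lux_two {n : ℕ} {p : En n → ℝ} (hp : ∀ x, 0 ≤ p x) {F : En n → ℝ≥0∞}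
    (h : luxNorm p F ≤ 1) : ∫⁻ x, (F x / 2)^p x ≤ 1 := by
  have : luxNorm p F < 2 := h.trans_lt (by norm_num)
  obtain ⟨c, ⟨hc0, hc⟩, hc2⟩ := sInf_lt_iff.1 this
  refine le_trans (lintegral_mono fun x => ?_) hc
  exact ENNReal.rpow_le_rpow (ENNReal.div_le_div_left hc2.le _) (hp x)

lemma seqF_holder {n : ℕ} {θ q₀ q₁ q : ℝ} (hθ : 0 < θ) (hθ1 : θ < 1) (hq₀ : 0 < q₀) (hq₁ : 0 < q₁)
    (hq0 : 0 < q) (hq : 1 / q = (1 - θ) / q₀ + θ / q₁)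
    (α₀ α₁ α : En n → ℝ) (hα : ∀ x, α x = (1 - θ) * α₀ x + θ * α₁ x)
    (lam μ ν : ℕ → (Fin n → ℤ) → ℂ) (M : ℝ≥0∞)
    (h : ∀ v m, ENNReal.ofReal ‖lam v m‖ ≤
      M * ENNReal.ofReal ‖μ v m‖ ^ (1 - θ) * ENNReal.ofReal ‖ν v m‖ ^ θ) (x : En n) :
    seqF α q lam x ≤ M * (seqF α₀ q₀ μ x)^(1-θ) * (seqF α₁ q₁ ν x)^θ := by
  have h1θ : 0 < 1 - θ := by linarith
  unfold seqF
  have hst : (1-θ)*q/q₀ + θ*q/q₁ = 1 := by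
    have : (1-θ)*q/q₀ + θ*q/q₁ = q * ((1 - θ) / q₀ + θ / q₁) := by ring
    rw [this, ← hq]; field_simp
  set X : ℕ → ℝ≥0∞ := fun v =>
    ENNReal.ofReal ((2 : ℝ) ^ ((v : ℝ) * (α₀ x + n / 2)) * ‖μ v (mIdx v x)‖) with hX
  set Y : ℕ → ℝ≥0∞ := fun v =>
    ENNReal.ofReal ((2 : ℝ) ^ ((v : ℝ) * (α₁ x + n / 2)) * ‖ν v (mIdx v x)‖) with hY
  have hterm : ∀ v : ℕ, ENNReal.ofReal ((2 : ℝ) ^ ((v : ℝ) * (α x + n / 2)) * ‖lam v (mIdx v x)‖) ≤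
      M * (X v)^(1-θ) * (Y v)^θ := by
    intro v
    have hw : (2 : ℝ) ^ ((v : ℝ) * (α x + n / 2)) =
        ((2 : ℝ) ^ ((v : ℝ) * (α₀ x + n / 2)))^(1-θ) * ((2 : ℝ) ^ ((v : ℝ) * (α₁ x + n / 2)))^θ := by
      rw [← Real.rpow_mul (by norm_num), ← Real.rpow_mul (by norm_num),
        ← Real.rpow_add (by norm_num), hα]
      congr 1; ring
    simp only [hX, hY]
    rw [ENNReal.ofReal_mul (by positivity), ENNReal.ofReal_mul (by positivity),
      ENNReal.ofReal_mul (by positivity), hw, ENNReal.ofReal_mul (by positivity),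
      ENNReal.mul_rpow_of_nonneg _ _ h1θ.le, ENNReal.mul_rpow_of_nonneg _ _ hθ.le,
      ENNReal.ofReal_rpow_of_nonneg (by positivity) h1θ.le,
      ENNReal.ofReal_rpow_of_nonneg (by positivity) hθ.le]
    refine (mul_le_mul_right (h v (mIdx v x)) _).trans (le_of_eq ?_)
    ring
  have hs1 : 0 < (1-θ)*q/q₀ := by positivity
  have hs2 : 0 < θ*q/q₁ := by positivity
  calc _ ≤ (∑' v, M^q * ((X v^q₀)^((1-θ)*q/q₀) * (Y v^q₁)^(θ*q/q₁)))^(1/q) := by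
        apply ENNReal.rpow_le_rpow _ (by positivity)
        refine ENNReal.tsum_le_tsum fun v => ?_
        refine (ENNReal.rpow_le_rpow (hterm v) hq0.le).trans (le_of_eq ?_)
        rw [ENNReal.mul_rpow_of_nonneg _ _ hq0.le, ENNReal.mul_rpow_of_nonneg _ _ hq0.le]
        simp only [← ENNReal.rpow_mul]
        rw [mul_assoc]
        congr 3 <;> field_simp
    _ ≤ (M^q * ((∑' v, X v^q₀)^((1-θ)*q/q₀) * (∑' v, Y v^q₁)^(θ*q/q₁)))^(1/q) := by
        rw [ENNReal.tsum_mul_left]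
        gcongr
        exact holder_tsum _ _ hs1 hs2 hst
    _ = _ := by
        rw [ENNReal.mul_rpow_of_nonneg _ _ (by positivity),
          ENNReal.mul_rpow_of_nonneg _ _ (by positivity)]
        simp only [← ENNReal.rpow_mul]
        rw [mul_one_div_cancel hq0.ne', ENNReal.rpow_one, mul_assoc]
        congr 3 <;> field_simp

lemma lower_bound {n : ℕ} {θ q₀ q₁ q : ℝ} (hθ : 0 < θ) (hθ1 : θ < 1) (hq₀ : 0 < q₀) (hq₁ : 0 < q₁)
    (hq0 : 0 < q) (hq : 1 / q = (1 - θ) / q₀ + θ / q₁)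
    (p₀ p₁ p α₀ α₁ α : En n → ℝ) (hα : ∀ x, α x = (1 - θ) * α₀ x + θ * α₁ x)
    (hp : ∀ x, 1 / p x = (1 - θ) / p₀ x + θ / p₁ x)
    (hp1 : ∀ x, 1 ≤ p x) (hp₀1 : ∀ x, 1 ≤ p₀ x) (hp₁1 : ∀ x, 1 ≤ p₁ x)
    (hp₀m : Measurable p₀) (hα₀m : Measurable α₀)
    (lam : ℕ → (Fin n → ℤ) → ℂ) :
    ENNReal.ofReal (1/4) * seqNorm α p (fun _ => q) lam ≤
      calderonNorm (seqNorm α₀ p₀ fun _ => q₀) (seqNorm α₁ p₁ fun _ => q₁) θ lam := by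
  have h1θ : 0 < 1 - θ := by linarith
  have e4 : ENNReal.ofReal (1/4) = 4⁻¹ := by
    rw [one_div, ENNReal.ofReal_inv_of_pos (by norm_num)]; norm_num
  rw [e4, ← ENNReal.div_eq_inv_mul]
  refine le_sInf ?_
  rintro M₀ ⟨μ, ν, hμ, hν, hM₀⟩
  refine le_of_forall_gt_imp_ge_of_dense fun M hM => ?_
  rcases eq_or_ne M ⊤ with rfl | hMt
  · exact le_top
  have hM0 : M ≠ 0 := (zero_le.trans_lt hM).ne'
  have hMle : ∀ v m, ENNReal.ofReal ‖lam v m‖ ≤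
      M * ENNReal.ofReal ‖μ v m‖ ^ (1 - θ) * ENNReal.ofReal ‖ν v m‖ ^ θ := fun v m =>
    (hM₀ v m).trans (by gcongr)
  rw [seqNorm_eq] at hμ hν ⊢
  rw [ENNReal.div_le_iff (by norm_num) (by norm_num)]
  have iμ := lux_two (fun x => by linarith [hp₀1 x]) hμ
  have iν := lux_two (fun x => by linarith [hp₁1 x]) hν
  refine sInf_le ⟨by positivity, ?_⟩
  have hpt : ∀ x, (seqF α q lam x / (M * 4))^p x ≤
      2⁻¹ * ((seqF α₀ q₀ μ x / 2)^p₀ x + (seqF α₁ q₁ ν x / 2)^p₁ x) := by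
    intro x
    have hp0 : 0 < p x := by linarith [hp1 x]
    have hp₀0 : 0 < p₀ x := by linarith [hp₀1 x]
    have hp₁0 : 0 < p₁ x := by linarith [hp₁1 x]
    set G := seqF α₀ q₀ μ x / 2 with hG
    set H := seqF α₁ q₁ ν x / 2 with hH
    have hG2 : seqF α₀ q₀ μ x = 2 * G := by
      rw [hG, ENNReal.mul_div_cancel (by norm_num) (by norm_num)]
    have hH2 : seqF α₁ q₁ ν x = 2 * H := by
      rw [hH, ENNReal.mul_div_cancel (by norm_num) (by norm_num)]
    have h1 := seqF_holder hθ hθ1 hq₀ hq₁ hq0 hq α₀ α₁ α hα lam μ ν M hMle x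
    have h2 : M * (seqF α₀ q₀ μ x)^(1-θ) * (seqF α₁ q₁ ν x)^θ = 2⁻¹ * (G^(1-θ) * H^θ) * (M * 4) := by
      rw [hG2, hH2, ENNReal.mul_rpow_of_nonneg _ _ h1θ.le, ENNReal.mul_rpow_of_nonneg _ _ hθ.le]
      have : (2:ℝ≥0∞)^(1-θ) * 2^θ = 2 := by
        rw [← ENNReal.rpow_add_of_nonneg _ _ h1θ.le hθ.le]; simp
      have h4 : (2:ℝ≥0∞)⁻¹ * 4 = 2 := by
        rw [show (4:ℝ≥0∞) = 2 * 2 by norm_num, ← mul_assoc,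
          ENNReal.inv_mul_cancel (by norm_num) (by norm_num), one_mul]
      calc _ = M * (2^(1-θ) * 2^θ) * (G^(1-θ) * H^θ) := by ring
        _ = M * (2⁻¹ * 4) * (G^(1-θ) * H^θ) := by rw [this, h4]
        _ = _ := by ring
    have h3 : seqF α q lam x / (M * 4) ≤ 2⁻¹ * (G^(1-θ) * H^θ) := by
      apply ENNReal.div_le_of_le_mul
      rw [← h2]; exact h1
    calc _ ≤ (2⁻¹ * (G^(1-θ) * H^θ))^p x := ENNReal.rpow_le_rpow h3 hp0.le
      _ = 2⁻¹^p x * ((G^p₀ x)^((1-θ)*p x/p₀ x) * (H^p₁ x)^(θ*p x/p₁ x)) := by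
          rw [ENNReal.mul_rpow_of_nonneg _ _ hp0.le, ENNReal.mul_rpow_of_nonneg _ _ hp0.le]
          simp only [← ENNReal.rpow_mul]
          congr 3 <;> field_simp
      _ ≤ _ := by
          apply mul_le_mul'
          · calc (2⁻¹:ℝ≥0∞)^p x ≤ 2⁻¹^(1:ℝ) :=
                  ENNReal.rpow_le_rpow_of_exponent_ge (by norm_num) (hp1 x)
              _ = _ := ENNReal.rpow_one _
          · apply young_le _ _ (by positivity) (by positivity)
            have : (1-θ)*p x/p₀ x + θ*p x/p₁ x = p x * ((1 - θ) / p₀ x + θ / p₁ x) := by ring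
            rw [this, ← hp]; field_simp
  refine (lintegral_mono hpt).trans ?_
  have hmeas : Measurable fun x => (seqF α₀ q₀ μ x / 2)^p₀ x :=
    ((measurable_seqF α₀ hα₀m q₀ μ).div_const 2).pow hp₀m
  rw [lintegral_const_mul' _ _ (by norm_num), lintegral_add_left hmeas]
  calc _ ≤ (2⁻¹:ℝ≥0∞) * (1 + 1) := by gcongr
    _ = 1 := by
      rw [one_add_one_eq_two]; exact ENNReal.inv_mul_cancel (by norm_num) (by norm_num)
def bfun {n : ℕ} (α : En n → ℝ) (q c : ℝ) (lam : ℕ → (Fin n → ℤ) → ℂ) (v : ℕ) (m : Fin n → ℤ) : ℝ :=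
  (max ((2:ℝ)^((v:ℝ) * (α (corner v m) + n/2)) * ‖lam v m‖ / c)
    ((1/2)^v * (1 + ‖corner v m‖)^(-((n:ℝ)+1))))^q

lemma bfun_pos {n : ℕ} (α : En n → ℝ) (q c : ℝ) (lam : ℕ → (Fin n → ℤ) → ℂ) (v : ℕ)
    (m : Fin n → ℤ) : 0 < bfun α q c lam v m := by
  unfold bfun
  apply Real.rpow_pos_of_pos
  apply lt_max_of_lt_right
  positivity

lemma two_pow_compare {v : ℕ} {s t e K : ℝ} (h : |s - t| * ((v:ℝ)+1) ≤ K) :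
    (2:ℝ)^((v:ℝ) * (s + e)) ≤ 2^K * 2^((v:ℝ) * (t + e)) := by
  rw [← Real.rpow_add (by norm_num)]
  apply Real.rpow_le_rpow_of_exponent_le (by norm_num)
  have := le_abs_self (s - t)
  have h0 := abs_nonneg (s - t)
  have hv : (0:ℝ) ≤ v := Nat.cast_nonneg v
  nlinarith

lemma norm_corner_compare {n : ℕ} (v : ℕ) (x : En n) :
    ‖x‖ ≤ ‖corner v (mIdx v x)‖ + (n+1) ∧ ‖corner v (mIdx v x)‖ ≤ ‖x‖ + (n+1) := by
  have hn : (0:ℝ) ≤ n := Nat.cast_nonneg n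
  have hd := norm_sub_corner v x
  set X := corner v (mIdx v x)
  have hd' : ‖x - X‖ ≤ n + 1 := hd.trans (div_le_self (by linarith) (one_le_pow₀ (by norm_num)))
  have h1 := abs_norm_sub_norm_le x X
  have := abs_le.1 (h1.trans hd')
  constructor <;> linarith [this.1, this.2]

lemma sum_bfun_le {n : ℕ} (α : En n → ℝ) (q K c : ℝ) (hq : 1 ≤ q) (hK : 0 ≤ K) (hc : 0 < c)
    (hα : ∀ (v : ℕ) (x : En n), |α x - α (corner v (mIdx v x))| * ((v:ℝ)+1) ≤ K)
    (lam : ℕ → (Fin n → ℤ) → ℂ) (x : En n) :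
    ∑' v, ENNReal.ofReal (bfun α q c lam v (mIdx v x)) ≤
      ENNReal.ofReal (2^K + 2 * ((n:ℝ)+2)^((n:ℝ)+1)) ^ q *
        ((seqF α q lam x / ENNReal.ofReal c)^q +
          ENNReal.ofReal ((1+‖x‖)^(-((n:ℝ)+1)))^q) := by
  have hq0 : 0 < q := by linarith
  set w := (1+‖x‖)^(-((n:ℝ)+1)) with hw
  have hw0 : 0 < w := by positivity
  set D := ((n:ℝ)+2)^((n:ℝ)+1) with hD
  have hD0 : 0 < D := by positivity
  have hterm : ∀ v, ENNReal.ofReal (bfun α q c lam v (mIdx v x)) ≤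
      ENNReal.ofReal (2^K)^q * (ENNReal.ofReal ((2:ℝ)^((v:ℝ) * (α x + n/2)) * ‖lam v (mIdx v x)‖)
        / ENNReal.ofReal c)^q + ENNReal.ofReal (D * w)^q * 2⁻¹^v := by
    intro v
    set X := corner v (mIdx v x) with hX
    have hA : (2:ℝ)^((v:ℝ) * (α X + n/2)) * ‖lam v (mIdx v x)‖ / c ≤
        2^K * ((2:ℝ)^((v:ℝ) * (α x + n/2)) * ‖lam v (mIdx v x)‖ / c) := by
      have := two_pow_compare (v := v) (s := α X) (t := α x) (e := n/2) (K := K)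
        (by rw [abs_sub_comm]; exact hα v x)
      calc _ ≤ (2^K * (2:ℝ)^((v:ℝ) * (α x + n/2))) * ‖lam v (mIdx v x)‖ / c := by gcongr
        _ = _ := by ring
    have hE : (1 + ‖X‖)^(-((n:ℝ)+1)) ≤ D * w := by
      have h1 := (norm_corner_compare v x).1
      have h2 : 1 + ‖x‖ ≤ ((n:ℝ)+2) * (1+‖X‖) := by
        have hn : (0:ℝ) ≤ n := Nat.cast_nonneg n
        nlinarith [norm_nonneg X]
      have h3 : (1+‖x‖)^((n:ℝ)+1) ≤ D * (1+‖X‖)^((n:ℝ)+1) := by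
        rw [hD, ← Real.mul_rpow (by positivity) (by positivity)]
        gcongr
      rw [hw, Real.rpow_neg (by positivity), Real.rpow_neg (by positivity)]
      rw [← div_eq_mul_inv, le_div_iff₀ (by positivity), inv_mul_le_iff₀ (by positivity)]
      linarith
    have hb : bfun α q c lam v (mIdx v x) ≤
        (2^K * ((2:ℝ)^((v:ℝ) * (α x + n/2)) * ‖lam v (mIdx v x)‖ / c))^q +
        ((1/2)^v * (D * w))^q := by
      unfold bfun
      rw [← hX]
      have hnn : 0 ≤ (2^K * ((2:ℝ)^((v:ℝ) * (α x + n/2)) * ‖lam v (mIdx v x)‖ / c))^q := by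
        positivity
      have hnn' : 0 ≤ ((1/2)^v * (D * w))^q := by positivity
      rcases max_choice ((2:ℝ)^((v:ℝ) * (α X + n/2)) * ‖lam v (mIdx v x)‖ / c)
        ((1/2)^v * (1 + ‖X‖)^(-((n:ℝ)+1))) with h | h
      · rw [h]
        have := Real.rpow_le_rpow (by positivity) hA hq0.le
        linarith
      · rw [h]
        have : ((1/2)^v * (1 + ‖X‖)^(-((n:ℝ)+1)))^q ≤ ((1/2)^v * (D * w))^q := by gcongr
        linarith
    refine (ENNReal.ofReal_le_ofReal hb).trans ?_
    rw [ENNReal.ofReal_add (by positivity) (by positivity)]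
    apply add_le_add
    · rw [← ENNReal.ofReal_div_of_pos hc, ← ENNReal.mul_rpow_of_nonneg _ _ hq0.le,
        ← ENNReal.ofReal_mul (by positivity), ENNReal.ofReal_rpow_of_nonneg (by positivity) hq0.le]
    · rw [← ENNReal.ofReal_rpow_of_nonneg (by positivity) hq0.le,
        ENNReal.ofReal_mul (by positivity), ENNReal.mul_rpow_of_nonneg _ _ hq0.le, mul_comm]
      gcongr
      rw [ENNReal.ofReal_pow (by norm_num), one_div, ENNReal.ofReal_inv_of_pos (by norm_num)]
      calc _ ≤ ((ENNReal.ofReal 2)⁻¹^v)^(1:ℝ) := by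
            apply ENNReal.rpow_le_rpow_of_exponent_ge _ hq
            apply pow_le_one₀ zero_le
            norm_num
        _ = _ := by simp
  refine (ENNReal.tsum_le_tsum hterm).trans ?_
  rw [ENNReal.tsum_add, ENNReal.tsum_mul_left, ENNReal.tsum_mul_left, mul_add]
  apply add_le_add
  · have : ∑' v : ℕ, (ENNReal.ofReal ((2:ℝ)^((v:ℝ) * (α x + n/2)) * ‖lam v (mIdx v x)‖)
        / ENNReal.ofReal c)^q = (seqF α q lam x / ENNReal.ofReal c)^q := by
      simp only [ENNReal.div_rpow_of_nonneg _ _ hq0.le]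
      simp only [ENNReal.div_eq_inv_mul]
      rw [ENNReal.tsum_mul_left]
      congr 1
      unfold seqF
      rw [← ENNReal.rpow_mul, one_div_mul_cancel hq0.ne', ENNReal.rpow_one]
    rw [this]
    gcongr
    linarith
  · rw [ENNReal.tsum_geometric]
    have e : (1 - 2⁻¹ : ℝ≥0∞)⁻¹ = 2 := by
      rw [ENNReal.one_sub_inv_two, inv_inv]
    rw [e, ENNReal.ofReal_mul hD0.le, ENNReal.mul_rpow_of_nonneg _ _ hq0.le]
    calc _ = (ENNReal.ofReal D ^ q * 2) * ENNReal.ofReal w ^ q := by ring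
      _ ≤ _ := by
        gcongr
        calc ENNReal.ofReal D ^ q * 2 ≤ ENNReal.ofReal D ^ q * ENNReal.ofReal 2 ^ q := by
              gcongr
              calc (2:ℝ≥0∞) = (ENNReal.ofReal 2)^(1:ℝ) := by simp
                _ ≤ _ := ENNReal.rpow_le_rpow_of_exponent_le (by norm_num) hq
          _ = ENNReal.ofReal (2 * D)^q := by
              rw [← ENNReal.mul_rpow_of_nonneg _ _ hq0.le, ← ENNReal.ofReal_mul hD0.le, mul_comm]
          _ ≤ _ := by
              gcongr
              have : (0:ℝ) < 2^K := by positivity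
              linarith

lemma add_rpow_le (G w : ℝ≥0∞) {q P B : ℝ} (hq : 1 ≤ q) (hP : 1 ≤ P) (hPB : P ≤ B) :
    (G^q + w^q)^(P/q) ≤ 2^B * (G^P + w^P) := by
  have hq0 : 0 < q := by linarith
  have hP0 : 0 < P := by linarith
  have h1 : G^q + w^q ≤ 2 * (max G w)^q := by
    rw [two_mul]
    gcongr <;> simp
  calc _ ≤ (2 * (max G w)^q)^(P/q) := ENNReal.rpow_le_rpow h1 (by positivity)
    _ = 2^(P/q) * (max G w)^P := by
        rw [ENNReal.mul_rpow_of_nonneg _ _ (by positivity), ← ENNReal.rpow_mul,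
          mul_div_cancel₀ _ hq0.ne']
    _ ≤ _ := by
        apply mul_le_mul'
        · apply ENNReal.rpow_le_rpow_of_exponent_le (by norm_num)
          exact (div_le_self hP0.le hq).trans hPB
        · rcases max_choice G w with h | h <;> rw [h] <;> simp

lemma integral_bfun {n : ℕ} (α p : En n → ℝ) (q K B : ℝ) (hq : 1 ≤ q) (hK : 0 ≤ K)
    (hp1 : ∀ x, 1 ≤ p x) (hpB : ∀ x, p x ≤ B)
    (hα : ∀ (v : ℕ) (x : En n), |α x - α (corner v (mIdx v x))| * ((v:ℝ)+1) ≤ K) :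
    ∃ C : ℝ, 1 ≤ C ∧ ∀ (lam : ℕ → (Fin n → ℤ) → ℂ) (c : ℝ), 0 < c →
      ∫⁻ x, (seqF α q lam x / ENNReal.ofReal c)^p x ≤ 1 →
      ∫⁻ x, (∑' v, ENNReal.ofReal (bfun α q c lam v (mIdx v x)))^(p x/q) ≤ ENNReal.ofReal C := by
  have hq0 : 0 < q := by linarith
  set R := ENNReal.ofReal (2^K + 2 * ((n:ℝ)+2)^((n:ℝ)+1)) with hR
  have hR1 : 1 ≤ R := by
    rw [hR, ← ENNReal.ofReal_one]
    apply ENNReal.ofReal_le_ofReal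
    have : (1:ℝ) ≤ 2^K := Real.one_le_rpow (by norm_num) hK
    have : (0:ℝ) ≤ 2 * ((n:ℝ)+2)^((n:ℝ)+1) := by positivity
    linarith
  have hRt : R ≠ ⊤ := ENNReal.ofReal_ne_top
  have hB0 : 0 ≤ B := by linarith [hp1 0, hpB 0]
  set J : ℝ≥0∞ := ∫⁻ x : En n, ENNReal.ofReal ((1+‖x‖)^(-((n:ℝ)+1))) with hJ
  have hJt : J < ⊤ := finite_integral_one_add_norm (by simp)
  set Z := R^B * 2^B * (1 + J) with hZ
  have hZt : Z ≠ ⊤ := by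
    apply ENNReal.mul_ne_top (ENNReal.mul_ne_top _ _)
    · exact ENNReal.add_ne_top.2 ⟨by simp, hJt.ne⟩
    · exact ENNReal.rpow_ne_top_of_nonneg hB0 hRt
    · exact ENNReal.rpow_ne_top_of_nonneg hB0 (by norm_num)
  refine ⟨max 1 Z.toReal, le_max_left _ _, fun lam c hc hInt => ?_⟩
  refine le_trans ?_ (ENNReal.ofReal_le_ofReal (le_max_right _ _))
  rw [ENNReal.ofReal_toReal hZt]
  have hpt : ∀ x, (∑' v, ENNReal.ofReal (bfun α q c lam v (mIdx v x)))^(p x/q) ≤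
      R^B * 2^B * ((seqF α q lam x / ENNReal.ofReal c)^p x +
        ENNReal.ofReal ((1+‖x‖)^(-((n:ℝ)+1)))) := by
    intro x
    have hp0 : 0 < p x := by linarith [hp1 x]
    refine (ENNReal.rpow_le_rpow (sum_bfun_le α q K c hq hK hc hα lam x) (by positivity)).trans ?_
    rw [ENNReal.mul_rpow_of_nonneg _ _ (by positivity), ← ENNReal.rpow_mul,
          mul_div_cancel₀ _ hq0.ne', mul_assoc]
    apply mul_le_mul'
    · exact ENNReal.rpow_le_rpow_of_exponent_le hR1 (hpB x)
    · refine (add_rpow_le _ _ hq (hp1 x) (hpB x)).trans ?_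
      gcongr
      calc _ ≤ (ENNReal.ofReal ((1+‖x‖)^(-((n:ℝ)+1))))^(1:ℝ) := by
            apply ENNReal.rpow_le_rpow_of_exponent_ge _ (hp1 x)
            rw [ENNReal.ofReal_le_one]
            apply Real.rpow_le_one_of_one_le_of_nonpos
            · linarith [norm_nonneg x]
            · have hn : (0:ℝ) ≤ n := Nat.cast_nonneg n
              linarith
        _ = _ := ENNReal.rpow_one _
  refine (lintegral_mono hpt).trans ?_
  have hne : R^B * 2^B ≠ ⊤ := ENNReal.mul_ne_top
    (ENNReal.rpow_ne_top_of_nonneg hB0 hRt) (ENNReal.rpow_ne_top_of_nonneg hB0 (by norm_num))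
  rw [lintegral_const_mul' _ _ hne, lintegral_add_right _ (by fun_prop)]
  rw [hZ]
  gcongr

lemma log_bound {n : ℕ} (p : En n → ℝ) (q C : ℝ) (hq : 1 ≤ q) (hC : 1 ≤ C)
    (hp1 : ∀ x, 1 ≤ p x) :
    ∃ K : ℝ, 0 < K ∧ ∀ (α : En n → ℝ) (lam : ℕ → (Fin n → ℤ) → ℂ) (c : ℝ),
      ∫⁻ x, (∑' v, ENNReal.ofReal (bfun α q c lam v (mIdx v x)))^(p x/q) ≤ ENNReal.ofReal C →
      ∀ (v : ℕ) (x : En n),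
        |Real.log (∑ u ∈ Finset.range (v+1), bfun α q c lam u (mIdx u x))| ≤
          K * ((v:ℝ)+1+Real.log (Real.exp 1 + ‖x‖)) := by
  have hq0 : 0 < q := by linarith
  have hn : (0:ℝ) ≤ n := Nat.cast_nonneg n
  have hlC : 0 ≤ Real.log C := Real.log_nonneg hC
  have hl2 : 0 < Real.log 2 := Real.log_pos (by norm_num)
  have hln : 0 ≤ Real.log ((n:ℝ)+2) := Real.log_nonneg (by linarith)
  refine ⟨q * (Real.log C + n * Real.log 2) +
    q * (Real.log 2 + ((n:ℝ)+1) * (Real.log ((n:ℝ)+2) + 1)), by positivity, ?_⟩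
  intro α lam c hInt v x
  set b := bfun α q c lam with hb
  have hbp : ∀ u m, 0 < b u m := fun u m => bfun_pos α q c lam u m
  set T := ∑ u ∈ Finset.range (v+1), b u (mIdx u x) with hT
  have hT0 : 0 < T := Finset.sum_pos (fun i _ => hbp _ _) (by simp)
  have hL := one_le_log_e_add (norm_nonneg x)
  set L := Real.log (Real.exp 1 + ‖x‖) with hLd
  have hv : (0:ℝ) ≤ v := Nat.cast_nonneg v
  have hup : Real.log T ≤ q * (Real.log C + n * Real.log 2) * ((v:ℝ)+1+L) := by
    rcases le_total T 1 with h1 | h1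
    · exact (Real.log_nonpos hT0.le h1).trans (by positivity)
    have hcube : ∀ y ∈ dyadicCube n (v:ℤ) (mIdx v x), ENNReal.ofReal (T^(1/q)) ≤
        (∑' v, ENNReal.ofReal (b v (mIdx v y)))^(p y/q) := by
      intro y hy
      have hy' := (mem_dyadic_iff v _ y).1 hy
      have hTy : T = ∑ u ∈ Finset.range (v+1), b u (mIdx u y) := by
        refine Finset.sum_congr rfl fun u hu => ?_
        have huv : u ≤ v := Nat.lt_succ_iff.1 (Finset.mem_range.1 hu)
        rw [← mIdx_corner huv x, ← mIdx_corner huv y, hy']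
      rw [← ENNReal.ofReal_rpow_of_nonneg hT0.le (by positivity)]
      calc _ ≤ ENNReal.ofReal T ^ (p y/q) := by
            apply ENNReal.rpow_le_rpow_of_exponent_le
            · rw [← ENNReal.ofReal_one]; exact ENNReal.ofReal_le_ofReal h1
            · gcongr; exact hp1 y
        _ ≤ _ := by
            gcongr
            · have := hp1 y
              positivity
            rw [hTy, ENNReal.ofReal_sum_of_nonneg (fun i _ => (hbp _ _).le)]
            exact ENNReal.sum_le_tsum _
    have hmeas : MeasurableSet (dyadicCube n (v:ℤ) (mIdx v x)) := by
      have : dyadicCube n (v:ℤ) (mIdx v x) = mIdx v ⁻¹' {mIdx v x} := by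
        ext y; rw [mem_dyadic_iff]; simp [eq_comm]
      rw [this]
      exact measurable_mIdx v (measurableSet_singleton _)
    have h2 : ENNReal.ofReal (T^(1/q)) * volume (dyadicCube n (v:ℤ) (mIdx v x)) ≤
        ENNReal.ofReal C := by
      rw [← setLIntegral_const]
      refine (setLIntegral_mono' hmeas hcube).trans ?_
      exact (setLIntegral_le_lintegral _ _).trans hInt
    rw [volume_dyadic, ← ENNReal.ofReal_mul (by positivity),
      ENNReal.ofReal_le_ofReal_iff (by linarith)] at h2
    have h3 := Real.log_le_log (by positivity) h2
    rw [Real.log_mul (by positivity) (by positivity), Real.log_rpow hT0, Real.log_pow, one_div,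
      one_div, Real.log_inv, Real.log_pow] at h3
    have h4 : Real.log T ≤ q * (Real.log C + n * (v * Real.log 2)) := by
      have : q⁻¹ * Real.log T ≤ Real.log C + n * (v * Real.log 2) := by linarith
      rwa [inv_mul_le_iff₀ hq0] at this
    refine h4.trans ?_
    rw [mul_assoc]
    apply mul_le_mul_of_nonneg_left _ hq0.le
    have h5 : 0 ≤ (n:ℝ) * Real.log 2 := by positivity
    nlinarith
  have hlo : -(q * (Real.log 2 + ((n:ℝ)+1) * (Real.log ((n:ℝ)+2) + 1)) * ((v:ℝ)+1+L)) ≤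
      Real.log T := by
    have h1 : ((1/2:ℝ)^v * (1 + ‖corner v (mIdx v x)‖)^(-((n:ℝ)+1)))^q ≤ T := by
      calc _ ≤ b v (mIdx v x) := by
            rw [hb]; unfold bfun
            gcongr
            exact le_max_right _ _
        _ ≤ T := Finset.single_le_sum (f := fun u => b u (mIdx u x)) (fun i _ => (hbp _ _).le)
            (Finset.mem_range.2 (Nat.lt_succ_self v))
    have h2 := Real.log_le_log (by positivity) h1
    rw [Real.log_rpow (by positivity), Real.log_mul (by positivity) (by positivity), Real.log_pow,
      Real.log_rpow (by positivity), one_div, Real.log_inv] at h2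
    have h3 := (norm_corner_compare v x).2
    set X := corner v (mIdx v x)
    have h4 : 1 + ‖X‖ ≤ ((n:ℝ)+2) * (Real.exp 1 + ‖x‖) := by
      have he : 1 ≤ Real.exp 1 := Real.one_le_exp (by norm_num)
      nlinarith [norm_nonneg x]
    have h5 := Real.log_le_log (by positivity) h4
    rw [Real.log_mul (by positivity) (by positivity), ← hLd] at h5
    refine le_trans ?_ h2
    rw [mul_assoc, ← mul_neg]
    apply mul_le_mul_of_nonneg_left _ hq0.le
    have h6 : Real.log (1 + ‖X‖) ≤ (Real.log ((n:ℝ)+2) + 1) * ((v:ℝ)+1+L) := by nlinarith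
    have h7 : ((n:ℝ)+1) * Real.log (1 + ‖X‖) ≤
        ((n:ℝ)+1) * ((Real.log ((n:ℝ)+2) + 1) * ((v:ℝ)+1+L)) := by gcongr
    nlinarith
  rw [abs_le]
  have hp1 : 0 ≤ q * (Real.log C + n * Real.log 2) * ((v:ℝ)+1+L) := by positivity
  have hp2 : 0 ≤ q * (Real.log 2 + ((n:ℝ)+1) * (Real.log ((n:ℝ)+2) + 1)) * ((v:ℝ)+1+L) := by
    positivity
  constructor <;> linarith

def Tsum {n : ℕ} (b : ℕ → (Fin n → ℤ) → ℝ) (v : ℕ) (m : Fin n → ℤ) : ℝ :=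
  ∑ u ∈ Finset.range (v+1), b u (mIdx u (corner v m))

lemma Tsum_mIdx {n : ℕ} (b : ℕ → (Fin n → ℤ) → ℝ) (v : ℕ) (x : En n) :
    Tsum b v (mIdx v x) = ∑ u ∈ Finset.range (v+1), b u (mIdx u x) := by
  refine Finset.sum_congr rfl fun u hu => ?_
  rw [mIdx_corner (Nat.lt_succ_iff.1 (Finset.mem_range.1 hu))]

def muSeq {n : ℕ} (α₀ p p₀ : En n → ℝ) (q q₀ κ : ℝ) (b : ℕ → (Fin n → ℤ) → ℝ)
    (v : ℕ) (m : Fin n → ℤ) : ℝ :=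
  (2:ℝ)^(-((v:ℝ) * (α₀ (corner v m) + n/2))) * (κ * (b v m)^(1/q₀) *
    (Tsum b v m)^((p (corner v m) / p₀ (corner v m) - q/q₀)/q))

lemma half_main {n : ℕ} (α₀ p p₀ : En n → ℝ) (q q₀ B Kα Kr KL C₁ : ℝ)
    (hq : 1 ≤ q) (hq₀ : 1 ≤ q₀) (hKα : 0 ≤ Kα) (hKr : 0 ≤ Kr) (hKL : 0 ≤ KL) (hC₁ : 1 ≤ C₁)
    (hp1 : ∀ x, 1 ≤ p x) (hp₀1 : ∀ x, 1 ≤ p₀ x) (hp₀B : ∀ x, p₀ x ≤ B)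
    (hα : ∀ (v : ℕ) (x : En n), |α₀ x - α₀ (corner v (mIdx v x))| * ((v:ℝ)+1) ≤ Kα)
    (hr : ∀ (v : ℕ) (x : En n), |p (corner v (mIdx v x)) / p₀ (corner v (mIdx v x)) - p x / p₀ x| *
      ((v:ℝ)+1+Real.log (Real.exp 1 + ‖x‖)) ≤ Kr) :
    ∃ κ : ℝ, 0 < κ ∧ ∀ b : ℕ → (Fin n → ℤ) → ℝ, (∀ v m, 0 < b v m) →
      (∀ (v : ℕ) (x : En n), |Real.log (∑ u ∈ Finset.range (v+1), b u (mIdx u x))| ≤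
          KL * ((v:ℝ)+1+Real.log (Real.exp 1 + ‖x‖))) →
      ∫⁻ x, (∑' v, ENNReal.ofReal (b v (mIdx v x)))^(p x/q) ≤ ENNReal.ofReal C₁ →
      seqNorm α₀ p₀ (fun _ => q₀) (fun v m => ((muSeq α₀ p p₀ q q₀ κ b v m : ℝ) : ℂ)) ≤ 1 := by
  have hB : 1 ≤ B := (hp₀1 0).trans (hp₀B 0)
  obtain ⟨C, hC, hhalf⟩ := half_pt q q₀ B (KL * Kr) (2^Kα) hq hq₀ hB (by positivity)
    (Real.one_le_rpow (by norm_num) hKα)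
  refine ⟨min 1 (1/(C*C₁)), lt_min (by norm_num) (by positivity), ?_⟩
  set κ := min 1 (1/(C*C₁)) with hκ
  have hκ0 : 0 < κ := lt_min (by norm_num) (by positivity)
  intro b hb hlog hInt
  rw [seqNorm_eq]
  refine sInf_le ⟨by norm_num, ?_⟩
  have hpt : ∀ x, (seqF α₀ q₀ (fun v m => ((muSeq α₀ p p₀ q q₀ κ b v m : ℝ) : ℂ)) x / 1)^p₀ x ≤
      ENNReal.ofReal (C*κ) * (∑' v, ENNReal.ofReal (b v (mIdx v x)))^(p x/q) := by
    intro x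
    rw [div_one]
    unfold seqF
    refine hhalf (p x) (p₀ x) (fun v => b v (mIdx v x))
      (fun v => p (corner v (mIdx v x)) / p₀ (corner v (mIdx v x))) _ κ (hp1 x) (hp₀1 x) (hp₀B x)
      (fun v => hb _ _) (fun v => by positivity) ?_ hκ0 (min_le_left _ _) ?_
    · intro v
      have hL := one_le_log_e_add (norm_nonneg x)
      calc _ ≤ KL * ((v:ℝ)+1+Real.log (Real.exp 1 + ‖x‖)) *
            |p (corner v (mIdx v x)) / p₀ (corner v (mIdx v x)) - p x / p₀ x| :=
            mul_le_mul_of_nonneg_right (hlog v x) (abs_nonneg _)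
        _ = KL * (|p (corner v (mIdx v x)) / p₀ (corner v (mIdx v x)) - p x / p₀ x| *
            ((v:ℝ)+1+Real.log (Real.exp 1 + ‖x‖))) := by ring
        _ ≤ _ := mul_le_mul_of_nonneg_left (hr v x) hKL
    · intro v
      have hTp : 0 < Tsum b v (mIdx v x) := by
        unfold Tsum; exact Finset.sum_pos (fun i _ => hb _ _) (by simp)
      have hbp := hb v (mIdx v x)
      rw [Complex.norm_real, Real.norm_eq_abs, abs_of_nonneg (by unfold muSeq; positivity)]
      unfold muSeq
      rw [← Tsum_mIdx, ← mul_assoc]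
      apply mul_le_mul_of_nonneg_right _ (by positivity)
      have := two_pow_compare (v := v) (e := n/2) (hα v x)
      rw [Real.rpow_neg (by norm_num), ← div_eq_mul_inv, div_le_iff₀ (by positivity)]
      exact this
  refine (lintegral_mono hpt).trans ?_
  rw [lintegral_const_mul' _ _ ENNReal.ofReal_ne_top]
  calc _ ≤ ENNReal.ofReal (C*κ) * ENNReal.ofReal C₁ := by gcongr
    _ = ENNReal.ofReal (C*κ*C₁) := by rw [← ENNReal.ofReal_mul (by positivity)]
    _ ≤ 1 := by
      rw [ENNReal.ofReal_le_one]
      calc C*κ*C₁ ≤ C*(1/(C*C₁))*C₁ := by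
            gcongr; exact min_le_right _ _
        _ = 1 := by field_simp
/-- Theorem `calderon-prod11 copy(1)` (ii): for constant `q₀, q₁`, if
`γ(x) = p(x)/p₀(x) − q/q₀ ≠ 0` for all `x`, then
`(f^{α₀(·)}_{p₀(·),q₀})^{1−θ}·(f^{α₁(·)}_{p₁(·),q₁})^θ = f^{α(·)}_{p(·),q}`
with equivalent norms. -/
theorem stmt15 {n : ℕ} (θ : ℝ) (hθ : θ ∈ Set.Ioo (0 : ℝ) 1)
    (q₀ q₁ q : ℝ) (hq₀ : 1 ≤ q₀) (hq₁ : 1 ≤ q₁)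
    (p₀ p₁ α₀ α₁ p α : En n → ℝ)
    (hp₀ : ∃ c, GlobLogHolder c p₀) (hp₁ : ∃ c, GlobLogHolder c p₁)
    (hp₀b : ∃ b : ℝ, ∀ x, 1 ≤ p₀ x ∧ p₀ x ≤ b)
    (hp₁b : ∃ b : ℝ, ∀ x, 1 ≤ p₁ x ∧ p₁ x ≤ b)
    (hα₀ : ∃ c, LocLogHolder c α₀) (hα₁ : ∃ c, LocLogHolder c α₁)
    (hp : ∀ x, 1 / p x = (1 - θ) / p₀ x + θ / p₁ x)
    (hq : 1 / q = (1 - θ) / q₀ + θ / q₁)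
    (hα : ∀ x, α x = (1 - θ) * α₀ x + θ * α₁ x)
    (hγ : ∀ x, p x / p₀ x - q / q₀ ≠ 0) :
    ∃ c₁ c₂ : ℝ, 0 < c₁ ∧ 0 < c₂ ∧ ∀ lam : ℕ → (Fin n → ℤ) → ℂ,
      ENNReal.ofReal c₁ * seqNorm α p (fun _ => q) lam ≤
          calderonNorm (seqNorm α₀ p₀ fun _ => q₀) (seqNorm α₁ p₁ fun _ => q₁) θ lam ∧
        calderonNorm (seqNorm α₀ p₀ fun _ => q₀) (seqNorm α₁ p₁ fun _ => q₁) θ lam ≤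
          ENNReal.ofReal c₂ * seqNorm α p (fun _ => q) lam := by
  obtain ⟨hθ0, hθ1⟩ := hθ
  have h1θ : 0 < 1 - θ := by linarith
  obtain ⟨c0, hp₀⟩ := hp₀
  obtain ⟨c1, hp₁⟩ := hp₁
  obtain ⟨B0, hB0⟩ := hp₀b
  obtain ⟨B1, hB1⟩ := hp₁b
  obtain ⟨ca0, hα₀⟩ := hα₀
  obtain ⟨ca1, hα₁⟩ := hα₁
  set B := max (max B0 B1) (max q₀ q₁) with hBdef
  have hp₀1 : ∀ x, 1 ≤ p₀ x := fun x => (hB0 x).1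
  have hp₁1 : ∀ x, 1 ≤ p₁ x := fun x => (hB1 x).1
  have hp₀B : ∀ x, p₀ x ≤ B := fun x => (hB0 x).2.trans ((le_max_left _ _).trans (le_max_left _ _))
  have hp₁B : ∀ x, p₁ x ≤ B := fun x => (hB1 x).2.trans ((le_max_right _ _).trans (le_max_left _ _))
  have hpb : ∀ x, 1 ≤ p x ∧ p x ≤ B := fun x =>
    p_bounds hθ0 hθ1 (hp₀1 x) (hp₁1 x) (hp₀B x) (hp₁B x) (hp x)
  have hp1 : ∀ x, 1 ≤ p x := fun x => (hpb x).1
  have hpB : ∀ x, p x ≤ B := fun x => (hpb x).2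
  have hq1 : 1 ≤ q := (p_bounds hθ0 hθ1 hq₀ hq₁ (le_max_left q₀ q₁) (le_max_right q₀ q₁) hq).1
  have hq0 : 0 < q := by linarith
  have hB1' : 1 ≤ B := (hp1 0).trans (hpB 0)
  obtain ⟨Ka0, hKa0, hKa0'⟩ := hα₀.corner
  obtain ⟨Ka1, hKa1, hKa1'⟩ := hα₁.corner
  obtain ⟨K0, hK0, hK0'⟩ := hp₀.corner
  obtain ⟨K1, hK1, hK1'⟩ := hp₁.corner
  have hKa : ∀ (v : ℕ) (x : En n), |α x - α (corner v (mIdx v x))| * ((v:ℝ)+1) ≤ Ka0 + Ka1 := by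
    intro v x
    have e : α x - α (corner v (mIdx v x)) = (1-θ) * (α₀ x - α₀ (corner v (mIdx v x))) +
        θ * (α₁ x - α₁ (corner v (mIdx v x))) := by rw [hα, hα]; ring
    have h0 := hKa0' v x
    have h1 := hKa1' v x
    have hA := abs_nonneg (α₀ x - α₀ (corner v (mIdx v x)))
    have hA' := abs_nonneg (α₁ x - α₁ (corner v (mIdx v x)))
    have h2 : |α x - α (corner v (mIdx v x))| ≤ |α₀ x - α₀ (corner v (mIdx v x))| +
        |α₁ x - α₁ (corner v (mIdx v x))| := by
      rw [e]
      refine (abs_add_le _ _).trans ?_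
      rw [abs_mul, abs_mul, abs_of_pos h1θ, abs_of_pos hθ0]
      nlinarith
    have hv : (0:ℝ) ≤ v := Nat.cast_nonneg v
    calc _ ≤ (|α₀ x - α₀ (corner v (mIdx v x))| + |α₁ x - α₁ (corner v (mIdx v x))|) * ((v:ℝ)+1) :=
          mul_le_mul_of_nonneg_right h2 (by positivity)
      _ ≤ _ := by linarith
  have hr0 : ∀ (v : ℕ) (x : En n), |p (corner v (mIdx v x)) / p₀ (corner v (mIdx v x)) - p x / p₀ x| *
      ((v:ℝ)+1+Real.log (Real.exp 1 + ‖x‖)) ≤ B^3 * (K0 + K1) := by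
    intro v x
    set X := corner v (mIdx v x)
    have hL := one_le_log_e_add (norm_nonneg x)
    have h := ratio_diff (B := B) hθ0 hθ1 (hp₀1 x) (hp₁1 x) (hp₀1 X) (hp₁1 X) (hp₀B x) (hp₁B x)
      (by linarith [hp1 x]) (by linarith [hp1 X]) (hpB x) (hpB X) (hp x) (hp X)
    rw [abs_sub_comm]
    calc _ ≤ B^3 * (|p₀ x - p₀ X| + |p₁ x - p₁ X|) * ((v:ℝ)+1+Real.log (Real.exp 1 + ‖x‖)) :=
          mul_le_mul_of_nonneg_right h (by positivity)
      _ = B^3 * (|p₀ x - p₀ X| * ((v:ℝ)+1+Real.log (Real.exp 1 + ‖x‖)) +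
            |p₁ x - p₁ X| * ((v:ℝ)+1+Real.log (Real.exp 1 + ‖x‖))) := by ring
      _ ≤ _ := by
          gcongr
          · exact hK0' v x
          · exact hK1' v x
  have hr1 : ∀ (v : ℕ) (x : En n), |p (corner v (mIdx v x)) / p₁ (corner v (mIdx v x)) - p x / p₁ x| *
      ((v:ℝ)+1+Real.log (Real.exp 1 + ‖x‖)) ≤ B^3 * (K1 + K0) := by
    intro v x
    set X := corner v (mIdx v x)
    have hL := one_le_log_e_add (norm_nonneg x)
    have h := ratio_diff (B := B) h1θ (by linarith) (hp₁1 x) (hp₀1 x) (hp₁1 X) (hp₀1 X)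
      (hp₁B x) (hp₀B x)
      (by linarith [hp1 x]) (by linarith [hp1 X]) (hpB x) (hpB X)
      (by rw [hp x]; ring) (by rw [hp X]; ring)
    rw [abs_sub_comm]
    calc _ ≤ B^3 * (|p₁ x - p₁ X| + |p₀ x - p₀ X|) * ((v:ℝ)+1+Real.log (Real.exp 1 + ‖x‖)) :=
          mul_le_mul_of_nonneg_right h (by positivity)
      _ = B^3 * (|p₁ x - p₁ X| * ((v:ℝ)+1+Real.log (Real.exp 1 + ‖x‖)) +
            |p₀ x - p₀ X| * ((v:ℝ)+1+Real.log (Real.exp 1 + ‖x‖))) := by ring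
      _ ≤ _ := by
          gcongr
          · exact hK1' v x
          · exact hK0' v x
  obtain ⟨C₁, hC₁, hInt⟩ := integral_bfun α p q (Ka0 + Ka1) B hq1 (by positivity) hp1 hpB hKa
  obtain ⟨KL, hKL, hlog⟩ := log_bound p q C₁ hq1 hC₁ hp1
  obtain ⟨κ₀, hκ₀, hmain₀⟩ := half_main α₀ p p₀ q q₀ B Ka0 (B^3 * (K0+K1)) KL C₁ hq1 hq₀ hKa0.le
    (by positivity) hKL.le hC₁ hp1 hp₀1 hp₀B hKa0' hr0
  obtain ⟨κ₁, hκ₁, hmain₁⟩ := half_main α₁ p p₁ q q₁ B Ka1 (B^3 * (K1+K0)) KL C₁ hq1 hq₁ hKa1.le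
    (by positivity) hKL.le hC₁ hp1 hp₁1 hp₁B hKa1' hr1
  refine ⟨1/4, (κ₀^(1-θ) * κ₁^θ)⁻¹, by norm_num, by positivity, fun lam => ⟨?_, ?_⟩⟩
  · exact lower_bound hθ0 hθ1 (by linarith) (by linarith) hq0 hq p₀ p₁ p α₀ α₁ α hα hp hp1 hp₀1 hp₁1
      hp₀.1.cont.measurable hα₀.cont.measurable lam
  set c₂ := (κ₀^(1-θ) * κ₁^θ)⁻¹ with hc₂
  have hc₂0 : 0 < c₂ := by positivity
  have hc₂n : ENNReal.ofReal c₂ ≠ 0 := by simpa using hc₂0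
  rw [seqNorm_eq, mul_comm, ← ENNReal.div_le_iff hc₂n ENNReal.ofReal_ne_top]
  refine le_sInf ?_
  rintro c ⟨hc0, hc⟩
  rw [ENNReal.div_le_iff hc₂n ENNReal.ofReal_ne_top]
  rcases eq_or_ne c ⊤ with rfl | hct
  · rw [ENNReal.top_mul hc₂n]; exact le_top
  obtain ⟨d, hd, rfl⟩ : ∃ d : ℝ, 0 < d ∧ ENNReal.ofReal d = c :=
    ⟨c.toReal, ENNReal.toReal_pos hc0.ne' hct, ENNReal.ofReal_toReal hct⟩
  have hI := hInt lam d hd hc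
  have hL := hlog α lam d hI
  set b := bfun α q d lam with hb
  have hbp : ∀ v m, 0 < b v m := fun v m => bfun_pos α q d lam v m
  refine sInf_le ⟨_, _, hmain₀ b hbp hL hI, hmain₁ b hbp hL hI, fun v m => ?_⟩
  set X := corner v m with hX
  have hTp : 0 < Tsum b v m := by
    unfold Tsum; exact Finset.sum_pos (fun i _ => hbp _ _) (by simp)
  have hbv := hbp v m
  have hm0 : 0 ≤ muSeq α₀ p p₀ q q₀ κ₀ b v m := by unfold muSeq; positivity
  have hm1 : 0 ≤ muSeq α₁ p p₁ q q₁ κ₁ b v m := by unfold muSeq; positivity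
  rw [Complex.norm_real, Complex.norm_real, Real.norm_of_nonneg hm0, Real.norm_of_nonneg hm1,
    ENNReal.ofReal_rpow_of_nonneg hm0 h1θ.le, ENNReal.ofReal_rpow_of_nonneg hm1 hθ0.le,
    ← ENNReal.ofReal_mul hd.le, ← ENNReal.ofReal_mul (by positivity),
    ← ENNReal.ofReal_mul (by positivity)]
  apply ENNReal.ofReal_le_ofReal
  have hprod : (muSeq α₀ p p₀ q q₀ κ₀ b v m)^(1-θ) * (muSeq α₁ p p₁ q q₁ κ₁ b v m)^θ =
      (2:ℝ)^(-((v:ℝ) * (α X + n/2))) * (κ₀^(1-θ) * κ₁^θ) * (b v m)^(1/q) := by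
    unfold muSeq
    rw [← hX]
    have hT0 := hTp.le
    have hb0 := hbv.le
    rw [Real.mul_rpow (by positivity) (by positivity), Real.mul_rpow (by positivity) (by positivity),
      Real.mul_rpow (by positivity) (by positivity), Real.mul_rpow (by positivity) (by positivity),
      Real.mul_rpow (by positivity) (by positivity), Real.mul_rpow (by positivity) (by positivity)]
    simp only [← Real.rpow_mul hT0, ← Real.rpow_mul hb0, ← Real.rpow_mul (zero_le_two (α := ℝ))]
    have e1 : (2:ℝ)^(-((v:ℝ) * (α X + n/2))) = 2^(-((v:ℝ) * (α₀ X + n/2)) * (1-θ)) *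
        2^(-((v:ℝ) * (α₁ X + n/2)) * θ) := by
      rw [← Real.rpow_add (by norm_num), hα]; congr 1; ring
    have e2 : (b v m)^(1/q) = (b v m)^(1/q₀*(1-θ)) * (b v m)^(1/q₁*θ) := by
      rw [← Real.rpow_add hbv, hq]; congr 1; ring
    have e3 : (Tsum b v m)^((p X/p₀ X - q/q₀)/q*(1-θ)) *
        (Tsum b v m)^((p X/p₁ X - q/q₁)/q*θ) = 1 := by
      rw [← Real.rpow_add hTp]
      have hpX : 0 < p X := by linarith [hp1 X]
      have : (p X/p₀ X - q/q₀)/q*(1-θ) + (p X/p₁ X - q/q₁)/q*θ =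
          (p X * ((1-θ)/p₀ X + θ/p₁ X) - q * ((1-θ)/q₀ + θ/q₁))/q := by ring
      rw [this, ← hp, ← hq, mul_one_div_cancel hpX.ne', mul_one_div_cancel hq0.ne']
      simp
    rw [e1, e2]
    calc _ = 2^(-((v:ℝ) * (α₀ X + n/2)) * (1-θ)) * 2^(-((v:ℝ) * (α₁ X + n/2)) * θ) *
        (κ₀^(1-θ) * κ₁^θ) * ((b v m)^(1/q₀*(1-θ)) * (b v m)^(1/q₁*θ)) *
        ((Tsum b v m)^((p X/p₀ X - q/q₀)/q*(1-θ)) *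
        (Tsum b v m)^((p X/p₁ X - q/q₁)/q*θ)) := by ring
      _ = _ := by rw [e3, mul_one]
  have hA : (2:ℝ)^((v:ℝ) * (α X + n/2)) * ‖lam v m‖ / d ≤ (b v m)^(1/q) := by
    have : (b v m)^(1/q) = max ((2:ℝ)^((v:ℝ) * (α (corner v m) + n/2)) * ‖lam v m‖ / d)
        ((1/2)^v * (1 + ‖corner v m‖)^(-((n:ℝ)+1))) := by
      rw [hb]; unfold bfun
      rw [← Real.rpow_mul (le_max_of_le_right (by positivity)), mul_one_div_cancel hq0.ne',
        Real.rpow_one]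
    rw [this]
    exact le_max_left _ _
  rw [mul_assoc, hprod, hc₂, Real.rpow_neg (by norm_num)]
  have hw : (0:ℝ) < 2^((v:ℝ) * (α X + n/2)) := by positivity
  set w := (2:ℝ)^((v:ℝ) * (α X + n/2))
  have hκ : 0 < κ₀^(1-θ) * κ₁^θ := by positivity
  have e : d * (κ₀^(1-θ) * κ₁^θ)⁻¹ * (w⁻¹ * (κ₀^(1-θ) * κ₁^θ) * (b v m)^(1/q)) =
      d * w⁻¹ * (b v m)^(1/q) := by
    field_simp
  rw [e]
  calc ‖lam v m‖ = d * w⁻¹ * (w * ‖lam v m‖ / d) := by field_simp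
    _ ≤ _ := by gcongr
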